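/- Let g be a finite-dimensional simple Lie algebra over ℂ, let L(g) = ℂ[t,t⁻¹] ⊗ g be its loop algebra, and let V be an irreducible finite-dimensional L(g)-module. Then the annihilator Ann(V) = {z ∈ L(g) : z·v = 0 for all v ∈ V} equals I ⊗ g for some nonzero radical ideal I of ℂ[t,t⁻¹]; equivalently, Ann(V) = f·ℂ[t,t⁻¹] ⊗ g where f = (t−a₁)⋯(t−a_k) for some k ≥ 0 and pairwise distinct a₁, …, a_k ∈ ℂ×. -/

import Mathlib

open scoped TensorProduct

/-- The base ring `ℂ` acts as a Lie algebra of scalars on the loop algebra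
`ℂ[t,t⁻¹] ⊗[ℂ] g`. -/
noncomputable instance loopLieAlgebra (B : Type*) [CommRing B] [Algebra ℂ B]
    (g : Type) [LieRing g] [LieAlgebra ℂ g] : LieAlgebra ℂ (B ⊗[ℂ] g) where
  lie_smul c x y := by
    rw [← algebraMap_smul B c y, lie_smul, algebraMap_smul]

/-!
By Burnside's theorem the operators `ad x` generate `End g`, so every Lie ideal of `B ⊗ g` is
stable under `1 ⊗ End g`; applying rank one operators shows that it has the form `I ⊗ g`. For the
annihilator of `V`, the quotient `B ⧸ I` embeds into `Hom(g, End V)`, so it is finite-dimensional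
and `I ≠ 0` when `B` is the ring of Laurent polynomials. If `p ^ 2 ∈ I`, then `pB ⊗ g` acts on `V`
through an abelian ideal of the image of `B ⊗ g` in `End V`. That ideal lies in the radical, which
is the centre because `V` is irreducible, so `[B ⊗ g, pB ⊗ g]` kills `V`; as `g` is perfect this is
all of `pB ⊗ g`, whence `p ∈ I`. A generator of the radical ideal `I` is a product of distinct
linear factors, of which the one vanishing at `0` is a unit.
-/

section TensorLieIdeal

variable {R B L : Type*} [CommRing R] [CommRing B] [Algebra R B] [LieRing L] [LieAlgebra R L]

variable (L) in
/-- The Lie ideal `I ⊗ L` of `B ⊗ L` attached to an ideal `I` of `B`. It is encoded as the span of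
the pure tensors `p ⊗ x` with `p ∈ I`, that is, as the image of `I ⊗ L` in `B ⊗ L`. -/
def tensorLieIdeal (I : Ideal B) : LieIdeal R (B ⊗[R] L) where
  toSubmodule := Submodule.span R {w | ∃ p ∈ I, ∃ x : L, w = p ⊗ₜ[R] x}
  lie_mem {y z} hz := by
    change z ∈ Submodule.span R _ at hz
    change ⁅y, z⁆ ∈ Submodule.span R _
    induction hz using Submodule.span_induction with
    | zero => simp
    | add z w _ _ hz hw => simpa only [lie_add] using add_mem hz hw
    | smul c z _ hz => simpa only [lie_smul] using Submodule.smul_mem _ c hz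
    | mem z hz =>
      obtain ⟨p, hp, x, rfl⟩ := hz
      induction y with
      | zero => simp
      | add y w hy hw => simpa only [add_lie] using add_mem hy hw
      | tmul q y => exact Submodule.subset_span ⟨q * p, I.mul_mem_left q hp, ⁅y, x⁆, rfl⟩

lemma tmul_mem_tensorLieIdeal {I : Ideal B} {p : B} (hp : p ∈ I) (x : L) :
    p ⊗ₜ[R] x ∈ tensorLieIdeal (R := R) L I :=
  Submodule.subset_span ⟨p, hp, x, rfl⟩

lemma tensorLieIdeal_le_iff {I : Ideal B} {J : LieIdeal R (B ⊗[R] L)} :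
    tensorLieIdeal L I ≤ J ↔ ∀ p ∈ I, ∀ x : L, p ⊗ₜ[R] x ∈ J := by
  refine ⟨fun h p hp x ↦ h (tmul_mem_tensorLieIdeal hp x), fun h ↦ Submodule.span_le.mpr ?_⟩
  rintro _ ⟨p, hp, x, rfl⟩
  exact h p hp x

lemma lie_tensorLieIdeal_le (I I' : Ideal B) :
    ⁅tensorLieIdeal (R := R) L I, tensorLieIdeal (R := R) L I'⁆ ≤ tensorLieIdeal L (I * I') := by
  rw [LieSubmodule.lie_le_iff]
  intro y hy z hz
  induction hy using Submodule.span_induction with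
  | zero => simp
  | add y w _ _ hy hw => simpa only [add_lie] using add_mem hy hw
  | smul c y _ hy => simpa only [smul_lie] using SMulMemClass.smul_mem c hy
  | mem y hy =>
    obtain ⟨p, hp, x, rfl⟩ := hy
    induction hz using Submodule.span_induction with
    | zero => simp
    | add z w _ _ hz hw => simpa only [lie_add] using add_mem hz hw
    | smul c z _ hz => simpa only [lie_smul] using SMulMemClass.smul_mem c hz
    | mem z hz =>
      obtain ⟨q, hq, y, rfl⟩ := hz
      exact tmul_mem_tensorLieIdeal (Ideal.mul_mem_mul hp hq) ⁅x, y⁆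

/-- The coefficient ideal of a Lie ideal `J` of `B ⊗ L`: the largest ideal `I` of `B` with
`I ⊗ L ≤ J`. The multiplier `q` makes it an ideal of `B` for every Lie algebra `L`; it may be
dropped when `L` is perfect. -/
def coeffIdeal (J : LieIdeal R (B ⊗[R] L)) : Ideal B where
  carrier := {p | ∀ (q : B) (x : L), (q * p) ⊗ₜ[R] x ∈ J}
  zero_mem' q x := by simp
  add_mem' hp hp' q x := by
    rw [mul_add, TensorProduct.add_tmul]
    exact add_mem (hp q x) (hp' q x)
  smul_mem' r p hp q x := by simpa only [smul_eq_mul, mul_assoc] using hp (q * r) x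

lemma tensorLieIdeal_le_iff_le_coeffIdeal {I : Ideal B} {J : LieIdeal R (B ⊗[R] L)} :
    tensorLieIdeal L I ≤ J ↔ I ≤ coeffIdeal J := by
  rw [tensorLieIdeal_le_iff]
  exact ⟨fun h p hp q ↦ h (q * p) (I.mul_mem_left q hp), fun h p hp x ↦ by simpa using h hp 1 x⟩

section Perfect

variable (hL : ⁅(⊤ : LieIdeal R L), (⊤ : LieIdeal R L)⁆ = ⊤)

include hL

lemma tmul_mem_of_forall_tmul_lie_mem {P : Submodule R (B ⊗[R] L)} {p : B}
    (h : ∀ x y : L, p ⊗ₜ[R] ⁅x, y⁆ ∈ P) (x : L) : p ⊗ₜ[R] x ∈ P := by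
  have hle : (⁅(⊤ : LieIdeal R L), (⊤ : LieIdeal R L)⁆ : LieIdeal R L).toSubmodule ≤
      P.comap (TensorProduct.mk R B L p) := by
    rw [LieSubmodule.lieIdeal_oper_eq_linear_span', Submodule.span_le]
    rintro _ ⟨x, -, y, -, rfl⟩
    exact h x y
  rw [hL] at hle
  exact hle (Submodule.mem_top (x := x))

lemma mem_coeffIdeal_iff {J : LieIdeal R (B ⊗[R] L)} {p : B} :
    p ∈ coeffIdeal J ↔ ∀ x : L, p ⊗ₜ[R] x ∈ J := by
  refine ⟨fun h x ↦ by simpa using h 1 x, fun h q x ↦ ?_⟩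
  refine tmul_mem_of_forall_tmul_lie_mem (P := J.toSubmodule) hL (fun y z ↦ ?_) x
  simpa using J.lie_mem (x := q ⊗ₜ[R] y) (h z)

lemma lie_top_tensorLieIdeal (I : Ideal B) :
    ⁅(⊤ : LieIdeal R (B ⊗[R] L)), tensorLieIdeal (R := R) L I⁆ = tensorLieIdeal L I := by
  refine le_antisymm (LieSubmodule.lie_le_right _ _) (tensorLieIdeal_le_iff.mpr fun p hp x ↦ ?_)
  refine tmul_mem_of_forall_tmul_lie_mem hL (fun y z ↦ ?_) x
    (P := (⁅(⊤ : LieIdeal R (B ⊗[R] L)), tensorLieIdeal L I⁆ : LieIdeal R _).toSubmodule)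
  simpa using LieSubmodule.lie_mem_lie (LieSubmodule.mem_top (R := R) ((1 : B) ⊗ₜ[R] y))
    (tmul_mem_tensorLieIdeal (R := R) hp z)

end Perfect

end TensorLieIdeal

section IdealsOfTensor

lemma subalgebra_eq_top_of_isSimpleModule {K M : Type*} [Field K] [IsAlgClosed K] [AddCommGroup M]
    [Module K M] [FiniteDimensional K M] (A : Subalgebra K (Module.End K M)) [IsSimpleModule A M] :
    A = ⊤ := by
  have schur : Function.Surjective (algebraMap K (Module.End A M)) :=
    (IsSimpleModule.algebraMap_end_bijective_of_isAlgClosed K).2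
  have : Module.Finite (Module.End A M) M := .of_restrictScalars_finite K _ _
  refine eq_top_iff.mpr fun f _ ↦ ?_
  let f' : Module.End (Module.End A M) M :=
    { f with
      map_smul' := fun c m ↦ by
        obtain ⟨c, rfl⟩ := schur c
        simp }
  obtain ⟨a, ha⟩ := Module.Finite.toModuleEnd_moduleEnd_surjective (R := A) (M := M) f'
  have hf : (a : Module.End K M) = f := LinearMap.ext fun m ↦ congr($ha m)
  exact hf ▸ a.2

lemma subalgebra_eq_top_of_toEnd_mem {K L M : Type*} [Field K] [IsAlgClosed K] [LieRing L]
    [LieAlgebra K L] [AddCommGroup M] [Module K M] [FiniteDimensional K M] [LieRingModule L M]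
    [LieModule K L M] [LieModule.IsIrreducible K L M] (A : Subalgebra K (Module.End K M))
    (hA : ∀ x : L, LieModule.toEnd K L M x ∈ A) : A = ⊤ := by
  have : Nontrivial M := LieModule.nontrivial_of_isIrreducible K L M
  have : IsSimpleModule A M := by
    refine (isSimpleModule_iff A M).mpr (IsSimpleOrder.of_forall_eq_top fun N hN ↦ ?_)
    let N' : LieSubmodule K L M :=
      { N.restrictScalars K with
        lie_mem := fun {x _} hm ↦ N.smul_mem ⟨_, hA x⟩ hm }
    have hN' : N' ≠ ⊥ := fun h ↦ hN <| SetLike.coe_injective (congr((($h) : Set M)) :)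
    exact SetLike.coe_injective
      (congr(($((eq_bot_or_eq_top N').resolve_left hN') : Set M)) :)
  exact subalgebra_eq_top_of_isSimpleModule A

lemma lie_top_top_of_isSimple (R L : Type*) [CommRing R] [LieRing L] [LieAlgebra R L]
    [LieAlgebra.IsSimple R L] : ⁅(⊤ : LieIdeal R L), (⊤ : LieIdeal R L)⁆ = ⊤ := by
  refine lie_eq_self_of_isAtom_of_ne_bot isAtom_top fun h ↦ ?_
  refine LieAlgebra.IsSimple.non_abelian R (L := L) ⟨fun x y ↦ ?_⟩
  exact (LieSubmodule.lie_eq_bot_iff _ _).mp h x trivial y trivial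

variable {K B g : Type*} [Field K] [IsAlgClosed K] [CommRing B] [Algebra K B] [LieRing g]
  [LieAlgebra K g] [FiniteDimensional K g] [LieAlgebra.IsSimple K g]

lemma lTensor_mem_of_mem {J : LieIdeal K (B ⊗[K] g)} {z : B ⊗[K] g} (hz : z ∈ J)
    (f : Module.End K g) : f.lTensor B z ∈ J := by
  let A : Subalgebra K (Module.End K g) :=
    { carrier := {a | ∀ z ∈ J, a.lTensor B z ∈ J}
      mul_mem' := fun ha hb z hz ↦ by
        rw [LinearMap.lTensor_mul]
        exact ha _ (hb z hz)
      add_mem' := fun ha hb z hz ↦ by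
        rw [LinearMap.lTensor_add]
        exact add_mem (ha z hz) (hb z hz)
      algebraMap_mem' := fun c z hz ↦ by
        rw [Module.algebraMap_end_eq_smul_id, LinearMap.lTensor_smul, LinearMap.lTensor_id]
        exact J.smul_mem c hz }
  have lTensor_ad (x : g) (z : B ⊗[K] g) :
      (LieModule.toEnd K g g x).lTensor B z = ⁅(1 : B) ⊗ₜ[K] x, z⁆ := by
    induction z with
    | zero => simp
    | tmul p y => simp
    | add u v hu hv => rw [map_add, hu, hv, lie_add]
  have hA : A = ⊤ := subalgebra_eq_top_of_toEnd_mem A fun x z hz ↦ by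
    rw [lTensor_ad]
    exact J.lie_mem hz
  exact (hA ▸ Algebra.mem_top : f ∈ A) z hz

theorem tensorLieIdeal_coeffIdeal (J : LieIdeal K (B ⊗[K] g)) :
    tensorLieIdeal g (coeffIdeal J) = J := by
  refine le_antisymm (tensorLieIdeal_le_iff_le_coeffIdeal.mpr le_rfl) fun z hz ↦ ?_
  let b := Module.finBasis K g
  obtain ⟨c, rfl⟩ := TensorProduct.eq_repr_basis_right b z
  refine sum_mem fun i _ ↦ tmul_mem_tensorLieIdeal ?_ (b i)
  refine (mem_coeffIdeal_iff (lie_top_top_of_isSimple K g)).mpr fun x ↦ ?_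
  have hproj : ((b.coord i).smulRight x).lTensor B (c.sum fun j p ↦ p ⊗ₜ[K] b j) =
      c i ⊗ₜ[K] x := by
    simp +contextual [Finsupp.sum, Finsupp.single_apply, ite_smul, TensorProduct.tmul_ite]
  exact hproj ▸ lTensor_mem_of_mem hz _

end IdealsOfTensor

section Annihilator

section

attribute [local instance] LieRing.ofAssociativeRing

lemma isIrreducible_range_toEnd (R L M : Type*) [CommRing R] [LieRing L] [LieAlgebra R L]
    [AddCommGroup M] [Module R M] [LieRingModule L M] [LieModule R L M]
    [LieModule.IsIrreducible R L M] :
    LieModule.IsIrreducible R (LieModule.toEnd R L M).range M := by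
  have : Nontrivial M := LieModule.nontrivial_of_isIrreducible R L M
  refine LieModule.IsIrreducible.mk fun P hP ↦ ?_
  let P' : LieSubmodule R L M :=
    { P.toSubmodule with
      lie_mem := fun {x _} hm ↦ P.lie_mem (x := (LieModule.toEnd R L M).rangeRestrict x) hm }
  have hP' : P' ≠ ⊥ := fun h ↦ hP <| SetLike.coe_injective (congr((($h) : Set M)) :)
  exact SetLike.coe_injective
    (congr(($((eq_bot_or_eq_top P').resolve_left hP') : Set M)) :)

theorem lie_top_le_ker_of_lie_self_le_ker {K L V : Type*} [Field K] [CharZero K] [LieRing L]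
    [LieAlgebra K L] [AddCommGroup V] [Module K V] [FiniteDimensional K V] [LieRingModule L V]
    [LieModule K L V] [LieModule.IsTriangularizable K L V] [LieModule.IsIrreducible K L V]
    {N : LieIdeal K L} (hN : ⁅N, N⁆ ≤ LieModule.ker K L V) :
    ⁅(⊤ : LieIdeal K L), N⁆ ≤ LieModule.ker K L V := by
  let φ := (LieModule.toEnd K L V).rangeRestrict
  have hφ : Function.Surjective φ := LieHom.surjective_rangeRestrict _
  have hker : φ.ker = LieModule.ker K L V := by
    ext x
    simp [φ, Subtype.ext_iff, LinearMap.ext_iff]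
  rw [← hker, ← LieIdeal.map_eq_bot_iff, LieIdeal.map_bracket_eq φ hφ] at hN ⊢
  have := isIrreducible_range_toEnd K L V
  have := (LieAlgebra.hasCentralRadical_and_of_isIrreducible_of_isFaithful K
    (LieModule.toEnd K L V).range V).1
  have : IsLieAbelian (N.map φ) := (LieSubmodule.lie_abelian_iff_lie_self_eq_bot _).mpr hN
  have hcenter : N.map φ ≤ LieAlgebra.center K (LieModule.toEnd K L V).range := by
    rw [← LieAlgebra.radical_eq_center, ← LieAlgebra.LieIdeal.solvable_iff_le_radical]
    infer_instance
  rw [eq_bot_iff, ← (LieModule.le_max_triv_iff_bracket_eq_bot K _ _).mp hcenter]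
  exact LieSubmodule.mono_lie_left _ le_top

end

lemma isRadical_coeffIdeal_ker {K B L V : Type*} [Field K] [CharZero K] [CommRing B] [Algebra K B]
    [LieRing L] [LieAlgebra K L] [AddCommGroup V] [Module K V] [FiniteDimensional K V]
    [LieRingModule (B ⊗[K] L) V] [LieModule K (B ⊗[K] L) V]
    [LieModule.IsTriangularizable K (B ⊗[K] L) V] [LieModule.IsIrreducible K (B ⊗[K] L) V]
    (hL : ⁅(⊤ : LieIdeal K L), (⊤ : LieIdeal K L)⁆ = ⊤) :
    (coeffIdeal (LieModule.ker K (B ⊗[K] L) V)).IsRadical := by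
  refine (Ideal.isRadical_iff_pow_one_lt 2 one_lt_two).mpr fun p hp ↦ ?_
  let P : LieIdeal K (B ⊗[K] L) := tensorLieIdeal L (Ideal.span {p})
  have hPP : ⁅P, P⁆ ≤ LieModule.ker K (B ⊗[K] L) V := by
    refine (lie_tensorLieIdeal_le _ _).trans (tensorLieIdeal_le_iff_le_coeffIdeal.mpr ?_)
    rwa [Ideal.span_singleton_mul_span_singleton, ← pow_two, Ideal.span_singleton_le_iff_mem]
  have hP : P ≤ LieModule.ker K (B ⊗[K] L) V := by
    simpa only [P, lie_top_tensorLieIdeal hL] using lie_top_le_ker_of_lie_self_le_ker hPP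
  rwa [tensorLieIdeal_le_iff_le_coeffIdeal, Ideal.span_singleton_le_iff_mem] at hP

lemma finite_quotient_coeffIdeal_ker {R B L V : Type*} [CommRing R] [IsNoetherianRing R]
    [CommRing B] [Algebra R B] [LieRing L] [LieAlgebra R L] [Module.Finite R L] [AddCommGroup V]
    [Module R V] [Module.Finite R V] [LieRingModule (B ⊗[R] L) V] [LieModule R (B ⊗[R] L) V]
    (hL : ⁅(⊤ : LieIdeal R L), (⊤ : LieIdeal R L)⁆ = ⊤) :
    Module.Finite R (B ⧸ coeffIdeal (LieModule.ker R (B ⊗[R] L) V)) := by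
  let φ : B →ₗ[R] L →ₗ[R] Module.End R V :=
    (TensorProduct.mk R B L).compr₂ (LieModule.toEnd R (B ⊗[R] L) V : _ →ₗ[R] Module.End R V)
  have hφ : φ.ker = (coeffIdeal (LieModule.ker R (B ⊗[R] L) V)).restrictScalars R := by
    ext p
    simp [φ, mem_coeffIdeal_iff hL, LinearMap.ext_iff]
  have : Module.Finite R (B ⧸ φ.ker) := .equiv φ.quotKerEquivRange.symm
  rw [hφ] at this
  exact .equiv (Submodule.Quotient.restrictScalarsEquiv R _)

end Annihilator

section LaurentPolynomial

open Polynomial LaurentPolynomial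

lemma not_finite_laurentPolynomial (R : Type*) [CommRing R] [IsNoetherianRing R] [Nontrivial R] :
    ¬ Module.Finite R R[T;T⁻¹] := fun _ ↦
  Polynomial.not_finite (R := R) <|
    .of_injective (toLaurentAlg (R := R)).toLinearMap toLaurent_injective

variable {K : Type*} [Field K] [IsAlgClosed K]

lemma exists_finset_eq_span_prod_X_sub_C {I : Ideal K[X]} (h0 : I ≠ ⊥) (hI : I.IsRadical) :
    ∃ s : Finset K, I = Ideal.span {∏ a ∈ s, (X - Polynomial.C a)} := by
  classical
  obtain ⟨f, rfl⟩ := (IsPrincipalIdealRing.principal I).principal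
  have hf : f ≠ 0 := by simpa using h0
  have hsq : Squarefree f := (isRadical_iff_span_singleton.mpr hI).squarefree hf
  have hroots : f.roots.toFinset.val = f.roots :=
    (nodup_roots (PerfectField.separable_iff_squarefree.mpr hsq)).dedup
  have hprod : f = Polynomial.C f.leadingCoeff * ∏ a ∈ f.roots.toFinset, (X - Polynomial.C a) := by
    rw [Finset.prod, hroots]
    exact (IsAlgClosed.splits f).eq_prod_roots
  refine ⟨f.roots.toFinset, ?_⟩
  conv_lhs => rw [hprod]
  exact Ideal.span_singleton_mul_left_unit (Polynomial.isUnit_C.mpr (by simpa using hf)) _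

lemma exists_finset_eq_span_prod_T_sub_C {I : Ideal K[T;T⁻¹]} (h0 : I ≠ ⊥) (hI : I.IsRadical) :
    ∃ s : Finset K, 0 ∉ s ∧ I = Ideal.span {∏ a ∈ s, (T 1 - LaurentPolynomial.C a)} := by
  classical
  have hmap : (I.comap (algebraMap K[X] K[T;T⁻¹])).map (algebraMap K[X] K[T;T⁻¹]) = I :=
    IsLocalization.map_under (Submonoid.powers (X : K[X])) K[T;T⁻¹] I
  obtain ⟨s, hs⟩ := exists_finset_eq_span_prod_X_sub_C
    (fun h ↦ h0 (by rw [← hmap, h, Ideal.map_bot])) (hI.comap (algebraMap K[X] K[T;T⁻¹]))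
  have hIs : I = Ideal.span {∏ a ∈ s, (T 1 - LaurentPolynomial.C a)} := by
    rw [← hmap, hs, Ideal.map_span, Set.image_singleton, map_prod]
    simp [algebraMap_eq_toLaurent]
  refine ⟨s.erase 0, s.notMem_erase 0, hIs.trans ?_⟩
  by_cases h : (0 : K) ∈ s
  · -- The factor at `0` is the unit `T 1`.
    rw [← Finset.mul_prod_erase s _ h, map_zero, sub_zero,
      Ideal.span_singleton_mul_left_unit (isUnit_T 1)]
  · rw [Finset.erase_eq_of_notMem h]

end LaurentPolynomial

open LaurentPolynomial in
theorem annihilator_of_irreducible_loopAlgebra_module_general {K g V : Type*} [Field K]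
    [IsAlgClosed K] [CharZero K] [LieRing g] [LieAlgebra K g] [FiniteDimensional K g]
    [LieAlgebra.IsSimple K g] [AddCommGroup V] [Module K V] [LieRingModule (K[T;T⁻¹] ⊗[K] g) V]
    [LieModule K (K[T;T⁻¹] ⊗[K] g) V] [FiniteDimensional K V]
    (hV : LieModule.IsIrreducible K (K[T;T⁻¹] ⊗[K] g) V) :
    (∃ I : Ideal K[T;T⁻¹], I ≠ ⊥ ∧ I.IsRadical ∧
      {z : K[T;T⁻¹] ⊗[K] g | ∀ v : V, ⁅z, v⁆ = 0} =
        ↑(Submodule.span K {w : K[T;T⁻¹] ⊗[K] g | ∃ p ∈ I, ∃ x : g, w = p ⊗ₜ[K] x})) ∧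
    (∃ (k : ℕ) (a : Fin k → K), Function.Injective a ∧ (∀ i, a i ≠ 0) ∧
      {z : K[T;T⁻¹] ⊗[K] g | ∀ v : V, ⁅z, v⁆ = 0} =
        ↑(Submodule.span K {w : K[T;T⁻¹] ⊗[K] g |
          ∃ p ∈ Ideal.span {∏ i, (T 1 - C (a i))}, ∃ x : g, w = p ⊗ₜ[K] x})) := by
  have hg := lie_top_top_of_isSimple K g
  let J := LieModule.ker K (K[T;T⁻¹] ⊗[K] g) V
  have hJ : {z : K[T;T⁻¹] ⊗[K] g | ∀ v : V, ⁅z, v⁆ = 0} =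
      tensorLieIdeal (R := K) g (coeffIdeal J) := by
    ext z
    simp [tensorLieIdeal_coeffIdeal, J]
  have hbot : coeffIdeal J ≠ ⊥ := fun h ↦ by
    have := finite_quotient_coeffIdeal_ker (B := K[T;T⁻¹]) (V := V) hg
    rw [h] at this
    exact not_finite_laurentPolynomial K (.equiv (AlgEquiv.quotientBot K K[T;T⁻¹]).toLinearEquiv)
  have hrad : (coeffIdeal J).IsRadical := isRadical_coeffIdeal_ker hg
  obtain ⟨s, hs0, hs⟩ := exists_finset_eq_span_prod_T_sub_C hbot hrad
  let a (i : Fin s.card) : K := s.equivFin.symm i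
  refine ⟨⟨coeffIdeal J, hbot, hrad, hJ⟩, s.card, a,
    Subtype.val_injective.comp s.equivFin.symm.injective,
    fun i hi ↦ hs0 (hi ▸ (s.equivFin.symm i).2), ?_⟩
  rw [hJ, hs, s.equivFin.symm.prod_comp fun a : s ↦ T 1 - C (a : K),
    s.prod_coe_sort fun a ↦ T 1 - C a]
  rfl

/-- Let `g` be a finite-dimensional simple complex Lie algebra and let `V` be an
irreducible finite-dimensional module for the loop algebra `L(g) = ℂ[t,t⁻¹] ⊗ g`.
Then the annihilator `{z ∈ L(g) : z·V = 0}` equals `I ⊗ g` for some nonzero radical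
ideal `I` of `ℂ[t,t⁻¹]`; equivalently, it equals `f·ℂ[t,t⁻¹] ⊗ g` where
`f = (t−a₁)⋯(t−a_k)` for some `k ≥ 0` and pairwise distinct `a₁, …, a_k ∈ ℂˣ`. -/
theorem annihilator_of_irreducible_loopAlgebra_module (g : Type) [LieRing g]
    [LieAlgebra ℂ g] [FiniteDimensional ℂ g] [LieAlgebra.IsSimple ℂ g]
    (V : Type) [AddCommGroup V] [Module ℂ V]
    [LieRingModule (LaurentPolynomial ℂ ⊗[ℂ] g) V]
    [LieModule ℂ (LaurentPolynomial ℂ ⊗[ℂ] g) V]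
    [FiniteDimensional ℂ V]
    (hV : LieModule.IsIrreducible ℂ (LaurentPolynomial ℂ ⊗[ℂ] g) V) :
    (∃ I : Ideal (LaurentPolynomial ℂ), I ≠ ⊥ ∧ I.IsRadical ∧
      {z : LaurentPolynomial ℂ ⊗[ℂ] g | ∀ v : V, ⁅z, v⁆ = 0} =
        ↑(Submodule.span ℂ {w : LaurentPolynomial ℂ ⊗[ℂ] g |
            ∃ p ∈ I, ∃ x : g, w = p ⊗ₜ[ℂ] x})) ∧
    (∃ (k : ℕ) (a : Fin k → ℂ), Function.Injective a ∧ (∀ i, a i ≠ 0) ∧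
      {z : LaurentPolynomial ℂ ⊗[ℂ] g | ∀ v : V, ⁅z, v⁆ = 0} =
        ↑(Submodule.span ℂ {w : LaurentPolynomial ℂ ⊗[ℂ] g |
            ∃ p ∈ Ideal.span {∏ i, (LaurentPolynomial.T 1 - LaurentPolynomial.C (a i))},
              ∃ x : g, w = p ⊗ₜ[ℂ] x})) :=
  annihilator_of_irreducible_loopAlgebra_module_general hV
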